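/- Let G₁ be an r₁-regular graph on n₁ vertices and m₁ edges, let p,q ≥ 1 be integers, let G₂ = K_{p,q}, and let α ∈ [0,1]. (1) If r₁ = 1, then the A_α-spectrum of the subdivision-edge join G₁ ∨̲ G₂ consists precisely of: α; α(1+p) repeated q−1 times; α(1+q) repeated p−1 times; and the four roots of F(x) = (x² − α(3+p+q)x + (α²p+α²q+4α−2))·(x² − α(2+p+q)x + (α²+α²p+α²q+2αpq−pq)) − (1−α)²(x−α)((x−α)(p+q) − α(p+q)² + 2pq). (2) If r₁ ≥ 2, then the A_α-spectrum of G₁ ∨̲ G₂ consists precisely of: α(2+p+q) repeated m₁−n₁ times; α(m₁+p) repeated q−1 times; α(m₁+q) repeated p−1 times; the two roots of G_i(x) = x² − α(2+r₁+p+q)x + (α²r₁p+α²r₁q+3αr₁−r₁) − (1−α)λ_i(A_α(G₁)) for each i = 2,…,n₁; and the four roots of F(x) = (x² − α(2+r₁+p+q)x + r₁(α²p+α²q+4α−2))·(x² − α(2m₁+p+q)x + (α²m₁²+α²m₁p+α²m₁q+2αpq−pq)) − m₁(1−α)²(x−αr₁)((x−αm₁)(p+q) − α(p+q)² + 2pq).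 -/

import Mathlib

open Matrix Polynomial
open scoped Classical

noncomputable section

/-- `A_α(G) = α·D(G) + (1-α)·A(G)`, where `D(G)` is the diagonal degree matrix and
`A(G)` the adjacency matrix. -/
def Aalpha {V : Type*} [Fintype V] (G : SimpleGraph V) (α : ℝ) : Matrix V V ℝ :=
  α • Matrix.diagonal (fun v => (G.degree v : ℝ)) + (1 - α) • G.adjMatrix ℝ

/-- The subdivision-edge join `G₁ ∨̲ G₂`: take the subdivision graph `S(G₁)` (a new
vertex inserted in each edge of `G₁`) together with `G₂`, and join every inserted
vertex of `S(G₁)` with every vertex of `G₂`. -/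
def subdivisionEdgeJoin {V₁ V₂ : Type*} (G₁ : SimpleGraph V₁) (G₂ : SimpleGraph V₂) :
    SimpleGraph (V₁ ⊕ (↥G₁.edgeSet ⊕ V₂)) :=
  SimpleGraph.fromRel fun a b =>
    match a, b with
    | Sum.inl v, Sum.inr (Sum.inl e) => v ∈ (e : Sym2 V₁)
    | Sum.inr (Sum.inl _), Sum.inr (Sum.inr _) => True
    | Sum.inr (Sum.inr u), Sum.inr (Sum.inr w) => G₂.Adj u w
    | _, _ => False

/-!
On the vertices of the subdivision graph `S(G)`, the matrix `A_α(G ∨̲ H)` restricts to a block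
matrix with scalar diagonal blocks and a multiple of the vertex-edge incidence matrix `R` off the
diagonal. Since `G` is regular, `R * Rᵀ` is an affine function of `A_α(G)`, so a Schur complement
expresses the characteristic polynomial of this block through the eigenvalues of `A_α(G)`, each
contributing a quadratic factor.

The coupling of `S(G)` to `H` has rank two, so it enters the characteristic polynomial of
`A_α(G ∨̲ H)` only through the coronals of the two diagonal blocks. Row sums of `R` and `Rᵀ` being
constant, the coronal of the first block has the quadratic factor of the eigenvalue `r` as its
denominator; for `H = K_{p,q}` the second coronal is explicit. No resolvent is ever inverted: all
identities are multiplied out by characteristic polynomials, which are monic and can be cancelled.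
-/

section DivisionFreeDeterminants

variable {R m n k : Type*} [CommRing R] [Fintype m] [Fintype n] [Fintype k]
  [DecidableEq m] [DecidableEq n] [DecidableEq k]

theorem det_add_mul_mul_det_of_mul_eq {M : Matrix m m R} {U W : Matrix m k R} {E : Matrix k k R}
    (h : M * W = U * E) (V : Matrix k m R) :
    (M + U * V).det * E.det = M.det * (E + V * W).det := by
  have hmul : fromBlocks M U (-V) 1 * fromBlocks 1 (-W) 0 E = fromBlocks M 0 (-V) (E + V * W) := by
    simp [fromBlocks_multiply, h, add_comm]
  simpa using congrArg det hmul

theorem mul_det_fromBlocks_vecMulVec {P : Matrix m m R} {Q : Matrix n n R} {u a : m → R}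
    {w b : n → R} {c d : R} (ha : P *ᵥ a = c • u) (hb : Q *ᵥ b = d • w) (v : n → R) (x : m → R) :
    c * d * (fromBlocks P (vecMulVec u v) (vecMulVec w x) Q).det =
      P.det * Q.det * (c * d - (x ⬝ᵥ a) * (v ⬝ᵥ b)) := by
  let U (u : m → R) (w : n → R) : Matrix (m ⊕ n) (Fin 2) R :=
    of (Sum.elim (fun i => ![u i, 0]) (fun j => ![0, w j]))
  let V : Matrix (Fin 2) (m ⊕ n) R := of ![Sum.elim 0 v, Sum.elim x 0]
  have hsolve : fromBlocks P 0 0 Q * U a b = U u w * !![c, 0; 0, d] := by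
    ext i j
    have hai := fun i => congrFun ha i
    have hbi := fun i => congrFun hb i
    simp only [mulVec, dotProduct, Pi.smul_apply, smul_eq_mul] at hai hbi
    rcases i with i | i <;> fin_cases j <;>
      simp [U, mul_apply, hai, hbi, mul_comm]
  have hrank : fromBlocks P (vecMulVec u v) (vecMulVec w x) Q = fromBlocks P 0 0 Q + U u w * V := by
    ext i j
    rcases i with i | i <;> rcases j with j | j <;> simp [U, V, vecMulVec_apply, mul_apply]
  have hsmall : !![c, 0; 0, d] + V * U a b = !![c, v ⬝ᵥ b; x ⬝ᵥ a, d] := by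
    ext i j
    fin_cases i <;> fin_cases j <;> simp [U, V, vecMul, dotProduct]
  have hdet := det_add_mul_mul_det_of_mul_eq hsolve V
  rw [← hrank, hsmall, det_fin_two_of, det_fin_two_of, det_fromBlocks_zero₂₁] at hdet
  linear_combination hdet

theorem pow_mul_det_fromBlocks_smul_one (A : Matrix m m R) (B : Matrix m n R) (D : Matrix n m R)
    (z : R) :
    z ^ Fintype.card m * (fromBlocks A B D (z • 1)).det =
      z ^ Fintype.card n * (z • A - B * D).det := by
  have hmul : fromBlocks A B D (z • 1) * fromBlocks (z • 1) 0 (-D) 1 =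
      fromBlocks (z • A - B * D) B 0 (z • 1) := by
    simp [fromBlocks_multiply, sub_eq_add_neg]
  have hdet := congrArg det hmul
  simp only [det_mul, det_fromBlocks_zero₁₂, det_fromBlocks_zero₂₁, det_smul, det_one] at hdet
  linear_combination hdet

end DivisionFreeDeterminants

section CharacteristicPolynomials

theorem map_C_mulVec_one {R m n : Type*} [CommRing R] [Fintype n] (M : Matrix m n R) :
    M.map C *ᵥ (1 : n → R[X]) = C ∘ (M *ᵥ 1) := by
  ext1 i
  rw [Function.comp_apply, RingHom.map_mulVec]
  simp [Function.comp_def, Pi.one_def]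

variable {R m n : Type*} [CommRing R] [Fintype m] [Fintype n] [DecidableEq m] [DecidableEq n]

theorem det_smul_one_sub_map_C (A : Matrix n n R) (f : R[X]) :
    (f • (1 : Matrix n n R[X]) - A.map C).det = A.charpoly.comp f := by
  rw [smul_one_eq_diagonal, ← scalar_apply, ← eval_charpoly, charpoly_map, eval_map,
    Polynomial.comp]

theorem charmatrix_smul_one (c : R) :
    charmatrix (c • (1 : Matrix n n R)) = (X - C c) • (1 : Matrix n n R[X]) := by
  rw [smul_one_eq_diagonal, charmatrix_diagonal, smul_one_eq_diagonal]

theorem pow_mul_charpoly_fromBlocks_smul_one (c d : R) (B : Matrix m n R) (D : Matrix n m R) :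
    (X - C d) ^ Fintype.card m * (fromBlocks (c • 1) B D (d • 1)).charpoly =
      (X - C d) ^ Fintype.card n * (B * D).charpoly.comp ((X - C c) * (X - C d)) := by
  rw [charpoly, charmatrix_fromBlocks, charmatrix_smul_one, charmatrix_smul_one,
    pow_mul_det_fromBlocks_smul_one, ← det_smul_one_sub_map_C, Matrix.neg_mul, Matrix.mul_neg,
    neg_neg, smul_smul, mul_comm (X - C d), Matrix.map_mul]

theorem charpoly_smul_add_smul_one_of_charpoly_eq_prod {K : Type*} [Field K] {A : Matrix n n K}
    {μ : n → K} (hμ : A.charpoly = ∏ i, (X - C (μ i))) (a b : K) :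
    (a • A + b • 1).charpoly = ∏ i, (X - C (a * μ i + b)) := by
  obtain rfl | ha := eq_or_ne a 0
  · simp [smul_one_eq_diagonal, charpoly_diagonal]
  have haC : (C a : K[X]) * C a⁻¹ = 1 := by rw [← C_mul, mul_inv_cancel₀ ha, C_1]
  have hmatrix : charmatrix (a • A + b • 1) =
      C a • ((C a⁻¹ * (X - C b)) • (1 : Matrix n n K[X]) - A.map C) := by
    have hmap : (a • A + b • 1).map C = C a • A.map C + C b • (1 : Matrix n n K[X]) := by
      ext i j : 1
      simp [Matrix.one_apply, apply_ite C]
    rw [smul_sub, smul_smul, ← mul_assoc, haC, one_mul, charmatrix, RingHom.mapMatrix_apply, hmap,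
      scalar_apply, ← smul_one_eq_diagonal]
    module
  rw [charpoly, hmatrix, det_smul, det_smul_one_sub_map_C, hμ, prod_comp, ← Finset.card_univ,
    ← Finset.prod_const, ← Finset.prod_mul_distrib]
  refine Finset.prod_congr rfl fun i _ => ?_
  simp only [sub_comp, X_comp, C_comp, C_add, C_mul]
  linear_combination (X - C b) * haC

/-- The numerator `1ᵀ adj(X - M) 1` of the `M`-coronal `1ᵀ (X - M)⁻¹ 1`, whose denominator is the
characteristic polynomial of `M`. -/
def coronalNumerator (M : Matrix n n R) : R[X] :=
  (1 : n → R[X]) ⬝ᵥ (charmatrix M).adjugate *ᵥ 1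

theorem mul_coronalNumerator_of_mulVec_eq {M : Matrix n n R} {b : n → R[X]} {d : R[X]}
    (hb : charmatrix M *ᵥ b = d • 1) : d * coronalNumerator M = M.charpoly * ∑ i, b i := by
  have hadj : d • ((charmatrix M).adjugate *ᵥ (1 : n → R[X])) = M.charpoly • b := by
    rw [← mulVec_smul, ← hb, mulVec_mulVec, adjugate_mul, smul_mulVec, one_mulVec, charpoly]
  rw [coronalNumerator, ← smul_eq_mul, ← dotProduct_smul, hadj, dotProduct_smul, smul_eq_mul,
    one_dotProduct]

theorem mul_charpoly_fromBlocks_vecMulVec {P : Matrix m m R} {Q : Matrix n n R}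
    {β : R} {u : m → R} {a : m → R[X]} {c : R[X]} (ha : charmatrix P *ᵥ a = c • (C ∘ u)) :
    c * (fromBlocks P (β • vecMulVec u 1) (β • vecMulVec 1 u) Q).charpoly =
      P.charpoly * (c * Q.charpoly - C β ^ 2 * ((C ∘ u) ⬝ᵥ a) * coronalNumerator Q) := by
  have hQ : charmatrix Q *ᵥ ((charmatrix Q).adjugate *ᵥ 1) = Q.charpoly • (1 : n → R[X]) := by
    rw [mulVec_mulVec, mul_adjugate, smul_mulVec, one_mulVec, charpoly]
  have hblock : charmatrix (fromBlocks P (β • vecMulVec u 1) (β • vecMulVec 1 u) Q) =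
      fromBlocks (charmatrix P) (vecMulVec (C ∘ u) (-C β • 1))
        (vecMulVec 1 (-C β • (C ∘ u))) (charmatrix Q) := by
    rw [charmatrix_fromBlocks]
    congr 1 <;> ext1 i j <;> simp [vecMulVec_apply, mul_comm]
  have hdet := mul_det_fromBlocks_vecMulVec ha hQ (-C β • 1) (-C β • (C ∘ u))
  rw [← hblock, smul_dotProduct, smul_dotProduct, ← coronalNumerator, ← charpoly, ← charpoly,
    ← charpoly] at hdet
  refine Q.charpoly_monic.isRegular.left ?_
  simp only [smul_eq_mul] at hdet
  linear_combination hdet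

theorem charpoly_smul_one (c : R) :
    (c • (1 : Matrix n n R)).charpoly = (X - C c) ^ Fintype.card n := by
  rw [charpoly, charmatrix_smul_one, det_smul, det_one, mul_one]

theorem charpoly_fromBlocks_smul_one_vecMulVec_one [Nonempty m] [Nonempty n]
    (a b β : R) :
    (fromBlocks (a • (1 : Matrix m m R)) (β • vecMulVec 1 1) (β • vecMulVec 1 1)
        (b • (1 : Matrix n n R))).charpoly =
      (X - C a) ^ (Fintype.card m - 1) * (X - C b) ^ (Fintype.card n - 1) *
        ((X - C a) * (X - C b) - C (β ^ 2 * Fintype.card m * Fintype.card n)) := by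
  have hm : charmatrix (a • (1 : Matrix m m R)) *ᵥ 1 =
      (X - C a) • (C ∘ (1 : m → R)) := by
    rw [charmatrix_smul_one, smul_mulVec, one_mulVec]
    ext1 i
    simp
  have hn : charmatrix (b • (1 : Matrix n n R)) *ᵥ 1 = (X - C b) • 1 := by
    rw [charmatrix_smul_one, smul_mulVec, one_mulVec]
  have hcoronal := mul_coronalNumerator_of_mulVec_eq hn
  have hcharpoly := mul_charpoly_fromBlocks_vecMulVec (Q := b • (1 : Matrix n n R)) (β := β) hm
  rw [charpoly_smul_one, ← pow_sub_one_mul Fintype.card_ne_zero] at hcoronal hcharpoly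
  rw [charpoly_smul_one, ← pow_sub_one_mul Fintype.card_ne_zero (X - C b)] at hcharpoly
  refine ((monic_X_sub_C b).mul (monic_X_sub_C a)).isRegular.left ?_
  simp only [dotProduct, Function.comp_apply, Pi.one_apply, map_one, mul_one, Finset.sum_const,
    Finset.card_univ, nsmul_eq_mul] at hcoronal hcharpoly
  simp only [C_mul, C_pow, map_natCast]
  linear_combination (X - C b) * hcharpoly -
    (X - C a) ^ (Fintype.card m - 1) * (X - C a) * C β ^ 2 * Fintype.card m * hcoronal

theorem coronalNumerator_fromBlocks_smul_one_vecMulVec_one [Nonempty m] [Nonempty n]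
    (a b β : R) :
    coronalNumerator (fromBlocks (a • (1 : Matrix m m R)) (β • vecMulVec 1 1) (β • vecMulVec 1 1)
        (b • (1 : Matrix n n R))) =
      (X - C a) ^ (Fintype.card m - 1) * (X - C b) ^ (Fintype.card n - 1) *
        (C (Fintype.card m : R) * (X - C b) + C (Fintype.card n : R) * (X - C a) +
          C (2 * β * Fintype.card m * Fintype.card n)) := by
  set M := fromBlocks (a • (1 : Matrix m m R)) (β • vecMulVec 1 1) (β • vecMulVec 1 1)
    (b • (1 : Matrix n n R))
  set d : R[X] := (X - C a) * (X - C b) - C (β ^ 2 * Fintype.card m * Fintype.card n) with hd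
  have hd_regular : IsLeftRegular d := by
    have hmonic := M.charpoly_monic
    rw [charpoly_fromBlocks_smul_one_vecMulVec_one] at hmonic
    exact hmonic.isRegular.left.of_mul
  have hsolve : charmatrix M *ᵥ Sum.elim (fun _ => X - C b + C (β * Fintype.card n))
      (fun _ => X - C a + C (β * Fintype.card m)) = d • 1 := by
    rw [charmatrix_fromBlocks, charmatrix_smul_one, charmatrix_smul_one, fromBlocks_mulVec]
    ext1 i
    rcases i with i | i <;> simp [mulVec, dotProduct, one_apply, hd] <;> ring
  have hcoronal := mul_coronalNumerator_of_mulVec_eq hsolve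
  rw [charpoly_fromBlocks_smul_one_vecMulVec_one, ← hd] at hcoronal
  refine hd_regular (hcoronal.trans ?_)
  simp only [Fintype.sum_sum_type, Sum.elim_inl, Sum.elim_inr, Finset.sum_const, Finset.card_univ,
    nsmul_eq_mul, C_mul, map_natCast, C_ofNat]
  ring

end CharacteristicPolynomials

section EdgeIncidence

/-- The vertex-edge incidence matrix of `G`. The columns of `SimpleGraph.incMatrix` are indexed by
all unordered pairs of vertices; here only the edges are kept. -/
def edgeIncMatrix {V : Type*} [DecidableEq V] (G : SimpleGraph V) : Matrix V G.edgeSet ℝ :=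
  (G.incMatrix ℝ).submatrix id (↑)

theorem edgeIncMatrix_apply {V : Type*} [DecidableEq V] (G : SimpleGraph V) (v : V)
    (e : G.edgeSet) :
    edgeIncMatrix G v e = if v ∈ (e : Sym2 V) then 1 else 0 := by
  simp [edgeIncMatrix, SimpleGraph.incMatrix_apply', SimpleGraph.incidenceSet]

variable {V : Type*} [Fintype V] (G : SimpleGraph V)

theorem sum_edgeSet_eq_sum_sym2 {f : Sym2 V → ℝ} (hf : ∀ e ∉ G.edgeSet, f e = 0) :
    ∑ e : G.edgeSet, f e = ∑ e, f e := by
  rw [← Finset.sum_subset (Finset.subset_univ G.edgeFinset) fun e _ he => hf e (by simpa using he)]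
  exact (Finset.sum_subtype G.edgeFinset (by simp) f).symm

variable [DecidableEq V]

theorem edgeIncMatrix_mulVec_one : edgeIncMatrix G *ᵥ 1 = fun v => (G.degree v : ℝ) := by
  ext1 v
  rw [mulVec, dotProduct_one]
  refine (sum_edgeSet_eq_sum_sym2 G (f := G.incMatrix ℝ v) fun e he => ?_).trans
    G.sum_incMatrix_apply
  exact G.incMatrix_of_notMem_incidenceSet fun h => he h.1

theorem edgeIncMatrix_mulVec_one_of_regular {r : ℕ} (hreg : G.IsRegularOfDegree r) :
    edgeIncMatrix G *ᵥ 1 = fun _ => (r : ℝ) := by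
  simp only [edgeIncMatrix_mulVec_one, hreg.degree_eq]

theorem transpose_edgeIncMatrix_mulVec_one : (edgeIncMatrix G)ᵀ *ᵥ 1 = fun _ => 2 := by
  ext1 e
  rw [mulVec, dotProduct_one]
  exact G.sum_incMatrix_apply_of_mem_edgeSet e.2

theorem edgeIncMatrix_mul_transpose :
    edgeIncMatrix G * (edgeIncMatrix G)ᵀ =
      G.adjMatrix ℝ + diagonal (fun v => (G.degree v : ℝ)) := by
  have hsum : edgeIncMatrix G * (edgeIncMatrix G)ᵀ = G.incMatrix ℝ * (G.incMatrix ℝ)ᵀ := by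
    ext v w
    rw [mul_apply, mul_apply]
    refine sum_edgeSet_eq_sum_sym2 G (f := fun e => G.incMatrix ℝ v e * G.incMatrix ℝ w e)
      fun e he => ?_
    rw [G.incMatrix_of_notMem_incidenceSet fun h => he h.1, zero_mul]
  rw [hsum, SimpleGraph.incMatrix_mul_transpose]
  ext v w
  obtain rfl | hvw := eq_or_ne v w <;> simp [*]

end EdgeIncidence

section Aalpha

variable {V W : Type*} [Fintype V] [Fintype W] (G : SimpleGraph V) (α : ℝ)

theorem Aalpha_eq_diagonal_mulVec [DecidableEq V] :
    Aalpha G α = α • diagonal (G.adjMatrix ℝ *ᵥ 1) + (1 - α) • G.adjMatrix ℝ := by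
  have hdeg : G.adjMatrix ℝ *ᵥ 1 = fun v => (G.degree v : ℝ) := by
    ext1 v
    simp [Pi.one_def]
  rw [hdeg, Aalpha]
  congr!

theorem Aalpha_submatrix_equiv [DecidableEq W] (e : W ≃ V) :
    (Aalpha G α).submatrix e e = α • diagonal ((G.adjMatrix ℝ).submatrix e e *ᵥ 1) +
      (1 - α) • (G.adjMatrix ℝ).submatrix e e := by
  rw [Aalpha_eq_diagonal_mulVec, submatrix_mulVec_equiv]
  ext i j
  simp [diagonal_apply]

theorem Aalpha_mulVec_one : Aalpha G α *ᵥ 1 = fun v => (G.degree v : ℝ) := by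
  ext v
  simp [Aalpha_eq_diagonal_mulVec, add_mulVec, smul_mulVec, Pi.one_def, mulVec_diagonal]
  ring

variable {G} {r : ℕ}

theorem Aalpha_eq_of_regular [DecidableEq V] (hreg : G.IsRegularOfDegree r) :
    Aalpha G α = (α * r) • 1 + (1 - α) • G.adjMatrix ℝ := by
  ext v w
  obtain rfl | h := eq_or_ne v w <;> simp [Aalpha, hreg.degree_eq, *]

theorem trace_Aalpha_of_regular (hreg : G.IsRegularOfDegree r) :
    (Aalpha G α).trace = Fintype.card V * (α * r) := by
  simp [Aalpha_eq_of_regular α hreg]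
  ring

end Aalpha

section Spectrum

variable {V : Type*} [Fintype V] (G : SimpleGraph V) {α : ℝ}

theorem exists_le_degree_of_hasEigenvalue_Aalpha [DecidableEq V] (hα : α ≤ 1) {t : ℝ}
    (ht : Module.End.HasEigenvalue (toLin' (Aalpha G α)) t) : ∃ v, t ≤ G.degree v := by
  obtain ⟨v, hv⟩ := eigenvalue_mem_ball ht
  refine ⟨v, ?_⟩
  have hdiag : Aalpha G α v v = α * G.degree v := by
    simp [Aalpha]
  have hoff : ∑ w ∈ Finset.univ.erase v, ‖Aalpha G α v w‖ = (1 - α) * G.degree v := by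
    have hentry : ∀ w ∈ Finset.univ.erase v,
        ‖Aalpha G α v w‖ = (1 - α) * if G.Adj v w then 1 else 0 := fun w hw => by
      have hvw : v ≠ w := (Finset.ne_of_mem_erase hw).symm
      by_cases hadj : G.Adj v w <;>
        simp [Aalpha, hvw, hadj, abs_of_nonneg (sub_nonneg.mpr hα)]
    rw [Finset.sum_congr rfl hentry, ← Finset.mul_sum, Finset.sum_erase _ (by simp),
      ← SimpleGraph.degree_eq_sum_if_adj]
  rw [Metric.mem_closedBall, Real.dist_eq, hdiag, hoff] at hv
  linarith [(abs_le.mp hv).2]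

variable {G} {r : ℕ}

theorem two_mul_card_edgeSet_of_regular (hreg : G.IsRegularOfDegree r) :
    2 * Fintype.card G.edgeSet = Fintype.card V * r := by
  rw [← SimpleGraph.edgeFinset_card, ← G.sum_degrees_eq_twice_card_edges]
  simp [hreg.degree_eq]

theorem card_of_connected_of_regular_one (hconn : G.Connected) (hreg : G.IsRegularOfDegree 1) :
    Fintype.card V = 2 ∧ Fintype.card G.edgeSet = 1 := by
  have : Nonempty V := hconn.nonempty
  have hle := hconn.card_vert_le_card_edgeSet_add_one
  rw [Nat.card_eq_fintype_card, Nat.card_eq_fintype_card] at hle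
  have hdouble := two_mul_card_edgeSet_of_regular hreg
  have hpos := Fintype.card_pos (α := V)
  omega

theorem card_le_card_edgeSet_of_regular (hreg : G.IsRegularOfDegree r) (hr : 2 ≤ r) :
    Fintype.card V ≤ Fintype.card G.edgeSet := by
  have hdouble := two_mul_card_edgeSet_of_regular hreg
  linarith [Nat.mul_le_mul_left (Fintype.card V) hr]

variable [DecidableEq V] {μ : V → ℝ} {i₀ : V}

theorem sum_eq_of_regular (hreg : G.IsRegularOfDegree r)
    (hμ : (Aalpha G α).charpoly = ∏ i, (X - C (μ i))) :
    ∑ i, μ i = Fintype.card V * (α * r) := by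
  have htrace := trace_Aalpha_of_regular α hreg
  rw [trace_eq_neg_charpoly_nextCoeff, hμ, prod_X_sub_C_nextCoeff, neg_neg] at htrace
  exact htrace

theorem exists_erase_eq_singleton_of_connected_of_regular_one (hconn : G.Connected)
    (hreg : G.IsRegularOfDegree 1) (hμ : (Aalpha G α).charpoly = ∏ i, (X - C (μ i)))
    (hi₀ : μ i₀ = 1) : ∃ j, Finset.univ.erase i₀ = {j} ∧ μ j = 2 * α - 1 := by
  have hcard := (card_of_connected_of_regular_one hconn hreg).1
  obtain ⟨j, hj⟩ : ∃ j, Finset.univ.erase i₀ = {j} := by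
    rw [← Finset.card_eq_one, Finset.card_erase_of_mem (Finset.mem_univ _), Finset.card_univ, hcard]
  refine ⟨j, hj, ?_⟩
  have hsum := sum_eq_of_regular hreg hμ
  rw [← Finset.add_sum_erase _ _ (Finset.mem_univ i₀), hj, Finset.sum_singleton, hcard, hi₀] at hsum
  push_cast at hsum
  linarith

theorem hasEigenvalue_Aalpha_of_regular [Nonempty V] (hreg : G.IsRegularOfDegree r) :
    Module.End.HasEigenvalue (toLin' (Aalpha G α)) r := by
  refine Module.End.hasEigenvalue_of_hasEigenvector (x := 1)
    (Module.End.hasEigenvector_iff.mpr ⟨Module.End.mem_eigenspace_iff.mpr ?_, one_ne_zero⟩)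
  ext v
  simp [Aalpha_mulVec_one, hreg.degree_eq]

theorem eq_degree_of_regular_of_forall_le (hα : α ≤ 1) (hreg : G.IsRegularOfDegree r)
    (hμ : (Aalpha G α).charpoly = ∏ i, (X - C (μ i))) (hmax : ∀ i, μ i ≤ μ i₀) : μ i₀ = r := by
  have : Nonempty V := ⟨i₀⟩
  have heigenvalue (t : ℝ) :
      Module.End.HasEigenvalue (toLin' (Aalpha G α)) t ↔ ∃ i, t = μ i := by
    rw [Module.End.hasEigenvalue_iff_isRoot_charpoly, charpoly_toLin', hμ, isRoot_prod]
    simp [sub_eq_zero]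
  obtain ⟨i, hi⟩ := (heigenvalue r).mp (hasEigenvalue_Aalpha_of_regular hreg)
  obtain ⟨v, hv⟩ := exists_le_degree_of_hasEigenvalue_Aalpha G hα ((heigenvalue _).mpr ⟨i₀, rfl⟩)
  rw [hreg.degree_eq] at hv
  exact hv.antisymm (hi ▸ hmax i)

end Spectrum

section SubdivisionEdgeJoin

variable {V₁ V₂ : Type*} (G₁ : SimpleGraph V₁) (G₂ : SimpleGraph V₂)

theorem adjMatrix_subdivisionEdgeJoin [DecidableEq V₁] :
    ((subdivisionEdgeJoin G₁ G₂).adjMatrix ℝ).submatrix (Equiv.sumAssoc _ _ _)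
        (Equiv.sumAssoc _ _ _) =
      fromBlocks (fromBlocks 0 (edgeIncMatrix G₁) (edgeIncMatrix G₁)ᵀ 0)
        (vecMulVec (Sum.elim 0 1) 1) (vecMulVec 1 (Sum.elim 0 1)) (G₂.adjMatrix ℝ) := by
  ext i j
  obtain (v | e) | w := i <;> obtain (v' | e') | w' := j <;>
    rw [submatrix_apply, SimpleGraph.adjMatrix_apply] <;>
    simp [subdivisionEdgeJoin, edgeIncMatrix_apply, G₂.adj_comm,
      and_iff_right_of_imp SimpleGraph.Adj.ne]

/-- The restriction to the vertices of the subdivision graph `S(G)` of the matrix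
`A_α(G ∨̲ H)`, for `G` regular of degree `r` and `H` on `k` vertices. -/
def subdivisionBlock {V : Type*} [DecidableEq V] (G : SimpleGraph V) (α r k : ℝ) :
    Matrix (V ⊕ G.edgeSet) (V ⊕ G.edgeSet) ℝ :=
  fromBlocks ((α * r) • 1) ((1 - α) • edgeIncMatrix G) ((1 - α) • (edgeIncMatrix G)ᵀ)
    ((α * (2 + k)) • 1)

/-- The monic quadratic whose two roots are the eigenvalues of `subdivisionBlock G α r k` lying over
the eigenvalue `t` of `A_α(G)`. -/
def subdivisionQuadratic (α r k t : ℝ) : ℝ[X] :=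
  (X - C (α * r)) * (X - C (α * (2 + k))) - C ((1 - α) * (t + r * (1 - 2 * α)))

theorem subdivisionQuadratic_monic (α r k t : ℝ) : (subdivisionQuadratic α r k t).Monic := by
  rw [subdivisionQuadratic]
  monicity!

theorem subdivisionQuadratic_eq (α r k t : ℝ) :
    subdivisionQuadratic α r k t = X ^ 2 - C (α * (2 + r + k)) * X +
      C (α ^ 2 * r * k + 3 * α * r - r - (1 - α) * t) := by
  simp only [subdivisionQuadratic, map_add, map_sub, map_mul, map_pow, map_one, C_ofNat]
  ring

theorem subdivisionQuadratic_self (α r k : ℝ) :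
    subdivisionQuadratic α r k r =
      X ^ 2 - C (α * (2 + r + k)) * X + C (r * (α ^ 2 * k + 4 * α - 2)) := by
  rw [subdivisionQuadratic_eq]
  ring_nf

theorem subdivisionQuadratic_one_two_mul_sub_one (α k : ℝ) :
    subdivisionQuadratic α 1 k (2 * α - 1) = (X - C (α * (2 + k))) * (X - C α) := by
  simp only [subdivisionQuadratic, mul_one, one_mul, sub_add_sub_cancel, sub_self, mul_zero, C_0,
    sub_zero]
  ring

variable [Fintype V₁] [Fintype V₂] [DecidableEq V₁] {G₁} {α : ℝ} {r : ℕ}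

theorem fromBlocks_edgeIncMatrix_mulVec_one (hreg : G₁.IsRegularOfDegree r) :
    fromBlocks (fromBlocks 0 (edgeIncMatrix G₁) (edgeIncMatrix G₁)ᵀ 0)
        (vecMulVec (Sum.elim 0 1) 1) (vecMulVec 1 (Sum.elim 0 1)) (G₂.adjMatrix ℝ) *ᵥ 1 =
      Sum.elim (Sum.elim (fun _ => (r : ℝ)) fun _ => 2 + Fintype.card V₂)
        (G₂.adjMatrix ℝ *ᵥ 1 + fun _ => (Fintype.card G₁.edgeSet : ℝ)) := by
  have hsubdivision : fromBlocks 0 (edgeIncMatrix G₁) (edgeIncMatrix G₁)ᵀ 0 *ᵥ 1 =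
      Sum.elim (fun _ => (r : ℝ)) fun _ => 2 := by
    rw [← Sum.elim_one_one, fromBlocks_mulVec, Sum.elim_comp_inl, Sum.elim_comp_inr,
      edgeIncMatrix_mulVec_one_of_regular G₁ hreg, transpose_edgeIncMatrix_mulVec_one]
    simp only [zero_mulVec, zero_add, add_zero]
  rw [← Sum.elim_one_one, fromBlocks_mulVec, Sum.elim_comp_inl, Sum.elim_comp_inr, hsubdivision,
    vecMulVec_mulVec, vecMulVec_mulVec]
  ext i
  obtain (v | e) | w := i
  all_goals simp [dotProduct, add_comm]

variable [DecidableEq V₂]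

theorem Aalpha_subdivisionEdgeJoin (α : ℝ) (hreg : G₁.IsRegularOfDegree r) :
    (Aalpha (subdivisionEdgeJoin G₁ G₂) α).submatrix (Equiv.sumAssoc _ _ _)
        (Equiv.sumAssoc _ _ _) =
      fromBlocks (subdivisionBlock G₁ α r (Fintype.card V₂))
        ((1 - α) • vecMulVec (Sum.elim 0 1) 1) ((1 - α) • vecMulVec 1 (Sum.elim 0 1))
        (Aalpha G₂ α + (α * Fintype.card G₁.edgeSet) • 1) := by
  rw [Aalpha_submatrix_equiv, adjMatrix_subdivisionEdgeJoin,
    fromBlocks_edgeIncMatrix_mulVec_one G₂ hreg, subdivisionBlock, Aalpha_eq_diagonal_mulVec,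
    ← fromBlocks_diagonal, ← fromBlocks_diagonal]
  simp only [fromBlocks_smul, fromBlocks_add, smul_zero, zero_add, add_zero]
  congr 1
  · simp only [smul_one_eq_diagonal, ← diagonal_smul, Pi.smul_def, smul_eq_mul]
  · have hdiagonal : diagonal (G₂.adjMatrix ℝ *ᵥ 1 + fun _ => (Fintype.card G₁.edgeSet : ℝ)) =
        diagonal (G₂.adjMatrix ℝ *ᵥ 1) + (Fintype.card G₁.edgeSet : ℝ) • 1 := by
      rw [smul_one_eq_diagonal, diagonal_add, Pi.add_def]
    rw [hdiagonal]
    module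

theorem smul_edgeIncMatrix_mul_smul_transpose (hreg : G₁.IsRegularOfDegree r) :
    ((1 - α) • edgeIncMatrix G₁) * ((1 - α) • (edgeIncMatrix G₁)ᵀ) =
      (1 - α) • Aalpha G₁ α + ((1 - α) * (r * (1 - 2 * α))) • 1 := by
  have hdeg : diagonal (fun v => (G₁.degree v : ℝ)) = (r : ℝ) • 1 := by
    simp [hreg.degree_eq, smul_one_eq_diagonal]
  rw [Matrix.smul_mul, Matrix.mul_smul, edgeIncMatrix_mul_transpose, hdeg,
    Aalpha_eq_of_regular α hreg]
  module

theorem pow_mul_charpoly_subdivisionBlock {μ : V₁ → ℝ} (hreg : G₁.IsRegularOfDegree r)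
    (hμ : (Aalpha G₁ α).charpoly = ∏ i, (X - C (μ i))) (k : ℝ) :
    (X - C (α * (2 + k))) ^ Fintype.card V₁ * (subdivisionBlock G₁ α r k).charpoly =
      (X - C (α * (2 + k))) ^ Fintype.card G₁.edgeSet *
        ∏ i, subdivisionQuadratic α r k (μ i) := by
  rw [subdivisionBlock, pow_mul_charpoly_fromBlocks_smul_one,
    smul_edgeIncMatrix_mul_smul_transpose hreg, charpoly_smul_add_smul_one_of_charpoly_eq_prod hμ,
    prod_comp]
  simp only [sub_comp, X_comp, C_comp, subdivisionQuadratic, mul_add]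

theorem charmatrix_subdivisionBlock_mulVec (hreg : G₁.IsRegularOfDegree r) (k : ℝ) :
    charmatrix (subdivisionBlock G₁ α r k) *ᵥ
        Sum.elim (C ((1 - α) * r) • 1) ((X - C (α * r)) • 1) =
      subdivisionQuadratic α r k r • (C ∘ (Sum.elim 0 1 : V₁ ⊕ G₁.edgeSet → ℝ)) := by
  rw [subdivisionBlock, charmatrix_fromBlocks, charmatrix_smul_one, charmatrix_smul_one,
    fromBlocks_mulVec]
  rw [Sum.elim_comp_inl, Sum.elim_comp_inr]
  simp only [mulVec_smul, smul_mulVec, one_mulVec, neg_mulVec, map_C_mulVec_one,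
    edgeIncMatrix_mulVec_one_of_regular G₁ hreg, transpose_edgeIncMatrix_mulVec_one]
  ext1 i
  rcases i with v | e
  · simp
    ring
  · simp [subdivisionQuadratic, C_ofNat]
    ring

theorem pow_mul_charpoly_subdivisionEdgeJoin {μ : V₁ → ℝ} {i₀ : V₁}
    (hreg : G₁.IsRegularOfDegree r) (hμ : (Aalpha G₁ α).charpoly = ∏ i, (X - C (μ i)))
    (hi₀ : μ i₀ = r) :
    (X - C (α * (2 + Fintype.card V₂))) ^ Fintype.card V₁ *
        (Aalpha (subdivisionEdgeJoin G₁ G₂) α).charpoly =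
      (X - C (α * (2 + Fintype.card V₂))) ^ Fintype.card G₁.edgeSet *
        (∏ i ∈ Finset.univ.erase i₀, subdivisionQuadratic α r (Fintype.card V₂) (μ i)) *
        (subdivisionQuadratic α r (Fintype.card V₂) r *
            (Aalpha G₂ α + (α * Fintype.card G₁.edgeSet) • 1).charpoly -
          C (Fintype.card G₁.edgeSet * (1 - α) ^ 2) * (X - C (α * r)) *
            coronalNumerator (Aalpha G₂ α + (α * Fintype.card G₁.edgeSet) • 1)) := by
  have hblock := pow_mul_charpoly_subdivisionBlock hreg hμ (Fintype.card V₂)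
  have hprod := Finset.mul_prod_erase Finset.univ
    (fun i => subdivisionQuadratic α r (Fintype.card V₂) (μ i)) (Finset.mem_univ i₀)
  have hreindex := charpoly_reindex (Equiv.sumAssoc V₁ G₁.edgeSet V₂).symm
    (Aalpha (subdivisionEdgeJoin G₁ G₂) α)
  rw [reindex_apply, Equiv.symm_symm] at hreindex
  have hjoin := mul_charpoly_fromBlocks_vecMulVec
    (Q := Aalpha G₂ α + (α * Fintype.card G₁.edgeSet) • 1) (β := 1 - α)
    (charmatrix_subdivisionBlock_mulVec (α := α) hreg (Fintype.card V₂))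
  have hdot : (C ∘ (Sum.elim 0 1 : V₁ ⊕ G₁.edgeSet → ℝ)) ⬝ᵥ
      Sum.elim (C ((1 - α) * r) • 1) ((X - C (α * r)) • 1) =
        (Fintype.card G₁.edgeSet : ℝ[X]) * (X - C (α * r)) := by
    simp [dotProduct, mul_sub]
  rw [← Aalpha_subdivisionEdgeJoin G₂ α hreg, hreindex, hdot] at hjoin
  refine mul_left_cancel₀ (subdivisionQuadratic_monic α r (Fintype.card V₂) r).ne_zero ?_
  rw [hi₀] at hprod
  rw [← hprod] at hblock
  rw [map_mul C (Fintype.card G₁.edgeSet : ℝ), map_pow, map_natCast]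
  set A₂ := Aalpha G₂ α + (α * Fintype.card G₁.edgeSet) • 1
  linear_combination
    (X - C (α * (2 + (Fintype.card V₂ : ℝ)))) ^ Fintype.card V₁ * hjoin +
      (subdivisionQuadratic α r (Fintype.card V₂) r * A₂.charpoly - C (1 - α) ^ 2 *
        (Fintype.card G₁.edgeSet * (X - C (α * r))) * coronalNumerator A₂) * hblock

end SubdivisionEdgeJoin

section CompleteBipartite

theorem adjMatrix_completeBipartiteGraph (V W : Type*) :
    (completeBipartiteGraph V W).adjMatrix ℝ =
      fromBlocks 0 (vecMulVec 1 1) (vecMulVec 1 1) 0 := by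
  ext i j
  rcases i with i | i <;> rcases j with j | j <;> simp

variable {V W : Type*} [Fintype V] [Fintype W] [DecidableEq V] [DecidableEq W]

theorem Aalpha_completeBipartiteGraph_add_smul_one (α c : ℝ) :
    Aalpha (completeBipartiteGraph V W) α + (α * c) • 1 =
      fromBlocks ((α * (c + Fintype.card W)) • 1) ((1 - α) • vecMulVec 1 1)
        ((1 - α) • vecMulVec 1 1) ((α * (c + Fintype.card V)) • 1) := by
  rw [Aalpha_eq_diagonal_mulVec, adjMatrix_completeBipartiteGraph]
  ext i j
  rcases i with i | i <;> rcases j with j | j <;>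
    simp [one_apply, diagonal_apply, mulVec, dotProduct, mul_add, add_comm,
      ite_add_ite]

variable [Nonempty V] [Nonempty W]

theorem charpoly_Aalpha_completeBipartiteGraph_add_smul_one (α c : ℝ) :
    (Aalpha (completeBipartiteGraph V W) α + (α * c) • 1).charpoly =
      (X - C (α * (c + Fintype.card V))) ^ (Fintype.card W - 1) *
        (X - C (α * (c + Fintype.card W))) ^ (Fintype.card V - 1) *
        (X ^ 2 - C (α * (2 * c + Fintype.card V + Fintype.card W)) * X +
          C (α ^ 2 * c ^ 2 + α ^ 2 * c * Fintype.card V + α ^ 2 * c * Fintype.card W +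
            2 * α * Fintype.card V * Fintype.card W - Fintype.card V * Fintype.card W)) := by
  rw [Aalpha_completeBipartiteGraph_add_smul_one, charpoly_fromBlocks_smul_one_vecMulVec_one]
  simp only [map_add, map_sub, map_mul, map_pow, map_one, map_ofNat]
  ring

theorem coronalNumerator_Aalpha_completeBipartiteGraph_add_smul_one (α c : ℝ) :
    coronalNumerator (Aalpha (completeBipartiteGraph V W) α + (α * c) • 1) =
      (X - C (α * (c + Fintype.card V))) ^ (Fintype.card W - 1) *
        (X - C (α * (c + Fintype.card W))) ^ (Fintype.card V - 1) *
        (C ((Fintype.card V : ℝ) + Fintype.card W) * (X - C (α * c)) -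
          C (α * ((Fintype.card V : ℝ) + Fintype.card W) ^ 2) +
          C (2 * (Fintype.card V : ℝ) * Fintype.card W)) := by
  rw [Aalpha_completeBipartiteGraph_add_smul_one,
    coronalNumerator_fromBlocks_smul_one_vecMulVec_one]
  simp only [map_add, map_sub, map_mul, map_pow, map_one, map_ofNat]
  ring

end CompleteBipartite

section SubdivisionEdgeJoinCompleteBipartite

variable {V : Type*} [Fintype V] [DecidableEq V] {G : SimpleGraph V} {r m p q : ℕ} {α : ℝ}
  {μ : V → ℝ} {i₀ : V}

theorem pow_mul_charpoly_subdivisionEdgeJoin_completeBipartite (hp : 1 ≤ p) (hq : 1 ≤ q)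
    (hreg : G.IsRegularOfDegree r) (hm : Fintype.card G.edgeSet = m)
    (hμ : (Aalpha G α).charpoly = ∏ i, (X - C (μ i))) (hi₀ : μ i₀ = r) :
    (X - C (α * (2 + (p + q)))) ^ Fintype.card V *
        (Aalpha (subdivisionEdgeJoin G (completeBipartiteGraph (Fin p) (Fin q))) α).charpoly =
      (X - C (α * (2 + (p + q)))) ^ m *
        (X - C (α * (m + p))) ^ (q - 1) *
        (X - C (α * (m + q))) ^ (p - 1) *
        (∏ i ∈ Finset.univ.erase i₀, subdivisionQuadratic α r (p + q) (μ i)) *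
        (subdivisionQuadratic α r (p + q) r *
            (X ^ 2 - C (α * (2 * m + p + q)) * X
              + C (α ^ 2 * m ^ 2 + α ^ 2 * m * p + α ^ 2 * m * q + 2 * α * p * q - p * q))
          - C (m * (1 - α) ^ 2) * (X - C (α * r)) *
            (C ((p : ℝ) + q) * (X - C (α * m)) - C (α * ((p : ℝ) + q) ^ 2)
              + C (2 * (p : ℝ) * q))) := by
  have : Nonempty (Fin p) := Fin.pos_iff_nonempty.mp hp
  have : Nonempty (Fin q) := Fin.pos_iff_nonempty.mp hq
  have hjoin := pow_mul_charpoly_subdivisionEdgeJoin (completeBipartiteGraph (Fin p) (Fin q))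
    hreg hμ hi₀
  rw [charpoly_Aalpha_completeBipartiteGraph_add_smul_one,
    coronalNumerator_Aalpha_completeBipartiteGraph_add_smul_one] at hjoin
  simp only [Fintype.card_sum, Fintype.card_fin, Nat.cast_add, hm] at hjoin
  rw [hjoin]
  ring

theorem Aalpha_spectrum_subdivisionEdgeJoin_completeBipartite_general
    (hp : 1 ≤ p) (hq : 1 ≤ q) (hreg : G.IsRegularOfDegree r)
    (hm : Fintype.card G.edgeSet = m) (hμ : (Aalpha G α).charpoly = ∏ i, (X - C (μ i)))
    (hi₀ : μ i₀ = r) :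
    (G.Connected → r = 1 →
      (Aalpha (subdivisionEdgeJoin G (completeBipartiteGraph (Fin p) (Fin q))) α).charpoly =
        (X - C α) *
        (X - C (α * (1 + p))) ^ (q - 1) *
        (X - C (α * (1 + q))) ^ (p - 1) *
        ((X ^ 2 - C (α * (3 + p + q)) * X + C (α ^ 2 * p + α ^ 2 * q + 4 * α - 2)) *
            (X ^ 2 - C (α * (2 + p + q)) * X
              + C (α ^ 2 + α ^ 2 * p + α ^ 2 * q + 2 * α * p * q - p * q))
          - C ((1 - α) ^ 2) * (X - C α) *
            (C ((p : ℝ) + q) * (X - C α) - C (α * ((p : ℝ) + q) ^ 2)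
              + C (2 * (p : ℝ) * q)))) ∧
    (2 ≤ r →
      (Aalpha (subdivisionEdgeJoin G (completeBipartiteGraph (Fin p) (Fin q))) α).charpoly =
        (X - C (α * (2 + p + q))) ^ (m - Fintype.card V) *
        (X - C (α * (m + p))) ^ (q - 1) *
        (X - C (α * (m + q))) ^ (p - 1) *
        (∏ i ∈ Finset.univ.filter (· ≠ i₀),
          (X ^ 2 - C (α * (2 + r + p + q)) * X
            + C (α ^ 2 * r * p + α ^ 2 * r * q + 3 * α * r - r - (1 - α) * μ i))) *
        ((X ^ 2 - C (α * (2 + r + p + q)) * X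
            + C (r * (α ^ 2 * p + α ^ 2 * q + 4 * α - 2))) *
            (X ^ 2 - C (α * (2 * m + p + q)) * X
              + C (α ^ 2 * m ^ 2 + α ^ 2 * m * p + α ^ 2 * m * q + 2 * α * p * q - p * q))
          - C (m * (1 - α) ^ 2) * (X - C (α * r)) *
            (C ((p : ℝ) + q) * (X - C (α * m)) - C (α * ((p : ℝ) + q) ^ 2)
              + C (2 * (p : ℝ) * q)))) := by
  have hjoin := pow_mul_charpoly_subdivisionEdgeJoin_completeBipartite hp hq hreg hm hμ hi₀
  have hcancel (n : ℕ) := pow_ne_zero n (X_sub_C_ne_zero (α * (2 + (p + q))))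
  refine ⟨fun hconn hr => mul_left_cancel₀ (hcancel _) (hjoin.trans ?_),
    fun hr => mul_left_cancel₀ (hcancel _) (hjoin.trans ?_)⟩
  · subst hr
    rw [Nat.cast_one] at hi₀ ⊢
    obtain ⟨hV, hE⟩ := card_of_connected_of_regular_one hconn hreg
    obtain ⟨j, hj, hμj⟩ := exists_erase_eq_singleton_of_connected_of_regular_one hconn hreg hμ hi₀
    rw [hV, ← hm, hE, hj, Finset.prod_singleton, hμj, subdivisionQuadratic_one_two_mul_sub_one,
      subdivisionQuadratic_self]
    simp only [map_add, map_sub, map_mul, map_pow, map_one, map_ofNat, Nat.cast_one]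
    ring
  · have hle : Fintype.card V ≤ m := hm ▸ card_le_card_edgeSet_of_regular hreg hr
    rw [← pow_mul_pow_sub _ hle, Finset.filter_ne', subdivisionQuadratic_self]
    simp only [subdivisionQuadratic_eq, mul_add, ← add_assoc, ← mul_assoc]

end SubdivisionEdgeJoinCompleteBipartite

/-- Corollary: the `A_α`-spectrum (as the factorization of the `A_α`-characteristic
polynomial) of the subdivision-edge join `G₁ ∨̲ K_{p,q}` of an `r₁`-regular graph `G₁`
and the complete bipartite graph `K_{p,q}`, in the cases `r₁ = 1` and `r₁ ≥ 2`. -/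
theorem Aalpha_spectrum_subdivisionEdgeJoin_completeBipartite
    {n₁ m₁ r₁ p q : ℕ} (hp : 1 ≤ p) (hq : 1 ≤ q)
    (G₁ : SimpleGraph (Fin n₁))
    (hconn₁ : G₁.Connected) (hreg₁ : G₁.IsRegularOfDegree r₁)
    (hm : Fintype.card G₁.edgeSet = m₁)
    (α : ℝ) (hα : α ∈ Set.Icc (0 : ℝ) 1)
    (μ₁ : Fin n₁ → ℝ) (hμ₁ : Antitone μ₁)
    (hμ₁ch : (Aalpha G₁ α).charpoly = ∏ i, (X - C (μ₁ i))) :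
    (r₁ = 1 →
      (Aalpha (subdivisionEdgeJoin G₁ (completeBipartiteGraph (Fin p) (Fin q))) α).charpoly =
        (X - C α) *
        (X - C (α * (1 + p))) ^ (q - 1) *
        (X - C (α * (1 + q))) ^ (p - 1) *
        ((X ^ 2 - C (α * (3 + p + q)) * X + C (α ^ 2 * p + α ^ 2 * q + 4 * α - 2)) *
            (X ^ 2 - C (α * (2 + p + q)) * X
              + C (α ^ 2 + α ^ 2 * p + α ^ 2 * q + 2 * α * p * q - p * q))
          - C ((1 - α) ^ 2) * (X - C α) *
            (C ((p : ℝ) + q) * (X - C α) - C (α * ((p : ℝ) + q) ^ 2)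
              + C (2 * (p : ℝ) * q)))) ∧
    (2 ≤ r₁ →
      (Aalpha (subdivisionEdgeJoin G₁ (completeBipartiteGraph (Fin p) (Fin q))) α).charpoly =
        (X - C (α * (2 + p + q))) ^ (m₁ - n₁) *
        (X - C (α * (m₁ + p))) ^ (q - 1) *
        (X - C (α * (m₁ + q))) ^ (p - 1) *
        (∏ i ∈ Finset.univ.filter (fun i : Fin n₁ => i.val ≠ 0),
          (X ^ 2 - C (α * (2 + r₁ + p + q)) * X
            + C (α ^ 2 * r₁ * p + α ^ 2 * r₁ * q + 3 * α * r₁ - r₁ - (1 - α) * μ₁ i))) *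
        ((X ^ 2 - C (α * (2 + r₁ + p + q)) * X
            + C (r₁ * (α ^ 2 * p + α ^ 2 * q + 4 * α - 2))) *
            (X ^ 2 - C (α * (2 * m₁ + p + q)) * X
              + C (α ^ 2 * m₁ ^ 2 + α ^ 2 * m₁ * p + α ^ 2 * m₁ * q + 2 * α * p * q - p * q))
          - C (m₁ * (1 - α) ^ 2) * (X - C (α * r₁)) *
            (C ((p : ℝ) + q) * (X - C (α * m₁)) - C (α * ((p : ℝ) + q) ^ 2)
              + C (2 * (p : ℝ) * q)))) := by
  have : NeZero n₁ := ⟨(Fin.pos_iff_nonempty.mpr hconn₁.nonempty).ne'⟩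
  have hdegree : μ₁ 0 = r₁ :=
    eq_degree_of_regular_of_forall_le hα.2 hreg₁ hμ₁ch fun i => hμ₁ (Fin.zero_le i)
  obtain ⟨hone, htwo⟩ := Aalpha_spectrum_subdivisionEdgeJoin_completeBipartite_general
    hp hq hreg₁ hm hμ₁ch hdegree
  exact ⟨hone hconn₁, by simpa only [Fintype.card_fin, ← Fin.val_ne_zero_iff] using htwo⟩
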